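/- Let p be a propositional atom and let H be a closed generic theory. Let (T_KP)₀ be the smallest closed theory containing H and the formula p ↔ K¬p, and let T_KP be the union of (T_KP)₀ with the schema T. Then for every set S of propositional atoms with p ∉ S, the model M_{(T_KP)₀,S} satisfies T_KP; in particular, T_KP is consistent. -/

import Mathlib

/-!
Write `T₀` for the closure of `H ∪ {p ↔ K¬p}`. A model `M_{T₀,S}` automatically satisfies every
`Kψ` with `ψ ∈ T₀`, so it satisfies `T₀` as soon as it satisfies the generators
(`canonModel_sat_closedClosure`); it satisfies `H` because `H` is closed generic.

The theory `T₀` does not entail `¬p`: otherwise, for `S` containing `p`, both `p` and `K¬p` hold in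
`M_{T₀,S}`, so this model satisfies `T₀` and hence `¬p`, although `p ∈ S`. Therefore, when
`p ∉ S`, both `p` and `K¬p` fail in `M_{T₀,S}`, which is thus a model of `T₀`. Being a model of
`T₀`, it satisfies whatever `T₀` entails, which is the schema `Kφ → φ` in `M_{T₀,S}`.
-/

/-- Formulas of propositional modal logic over atoms `A`. -/
inductive Formula (A : Type) : Type
  | atom : A → Formula A
  | neg : Formula A → Formula A
  | and : Formula A → Formula A → Formula A
  | or : Formula A → Formula A → Formula A
  | imp : Formula A → Formula A → Formula A
  | K : Formula A → Formula A

/-- A model assigns a truth value to each basic formula, i.e. to each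
atom and to each formula of the form `K φ`. -/
structure Model (A : Type) where
  atomVal : A → Prop
  kVal : Formula A → Prop

/-- Truth of a formula in a model. -/
def Model.Sat {A : Type} (M : Model A) : Formula A → Prop
  | .atom a => M.atomVal a
  | .neg φ => ¬ M.Sat φ
  | .and φ ψ => M.Sat φ ∧ M.Sat ψ
  | .or φ ψ => M.Sat φ ∨ M.Sat ψ
  | .imp φ ψ => M.Sat φ → M.Sat ψ
  | .K φ => M.kVal φ

/-- A model satisfies a theory if it satisfies each of its members. -/
def Model.SatTheory {A : Type} (M : Model A) (T : Set (Formula A)) : Prop :=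
  ∀ φ ∈ T, M.Sat φ

/-- `T` entails `φ`: every model of `T` satisfies `φ`. -/
def Entails {A : Type} (T : Set (Formula A)) (φ : Formula A) : Prop :=
  ∀ M : Model A, M.SatTheory T → M.Sat φ

/-- `φ` is valid iff it is entailed by the empty theory. -/
def Valid {A : Type} (φ : Formula A) : Prop := Entails ∅ φ

/-- A theory is closed if it contains `K φ` whenever it contains `φ`. -/
def TheoryClosed {A : Type} (T : Set (Formula A)) : Prop :=
  ∀ φ ∈ T, Formula.K φ ∈ T

/-- A theory is consistent iff some model satisfies it. -/
def Consistent {A : Type} (T : Set (Formula A)) : Prop :=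
  ∃ M : Model A, M.SatTheory T

/-- The schema V: `K φ` for every valid `φ`. -/
def schemaV (A : Type) : Set (Formula A) :=
  { χ | ∃ φ, Valid φ ∧ χ = Formula.K φ }

/-- The schema K: all formulas `K(φ→ψ) → (Kφ → Kψ)`. -/
def schemaK (A : Type) : Set (Formula A) :=
  { χ | ∃ φ ψ, χ = Formula.imp (Formula.K (Formula.imp φ ψ))
      (Formula.imp (Formula.K φ) (Formula.K ψ)) }

/-- The schema T: all formulas `Kφ → φ`. -/
def schemaT (A : Type) : Set (Formula A) :=
  { χ | ∃ φ, χ = Formula.imp (Formula.K φ) φ }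

/-- The schema KK (a.k.a. 4): all formulas `Kφ → KKφ`. -/
def schemaKK (A : Type) : Set (Formula A) :=
  { χ | ∃ φ, χ = Formula.imp (Formula.K φ) (Formula.K (Formula.K φ)) }

/-- `φ ↔ ψ` abbreviates `(φ→ψ) ∧ (ψ→φ)`. -/
def Formula.iffF {A : Type} (φ ψ : Formula A) : Formula A :=
  Formula.and (Formula.imp φ ψ) (Formula.imp ψ φ)

/-- The model `M_{T,S}`: atoms are true iff in `S`; `Kφ` true iff `T ⊨ φ`. -/
def canonModel {A : Type} (T : Set (Formula A)) (S : Set A) : Model A :=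
  { atomVal := fun a => a ∈ S, kVal := fun φ => Entails T φ }

/-- `T` is generic iff for every set `S` of atoms and every theory `T' ⊇ T`,
`M_{T',S} ⊨ T`. -/
def Generic {A : Type} (T : Set (Formula A)) : Prop :=
  ∀ (S : Set A) (T' : Set (Formula A)), T ⊆ T' → (canonModel T' S).SatTheory T

/-- `T` is closed generic iff for every set `S` of atoms and every closed
theory `T' ⊇ T`, `M_{T',S} ⊨ T`. -/
def ClosedGeneric {A : Type} (T : Set (Formula A)) : Prop :=
  ∀ (S : Set A) (T' : Set (Formula A)), TheoryClosed T' → T ⊆ T' →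
    (canonModel T' S).SatTheory T

/-- The smallest closed theory containing `X`: the intersection of all
closed theories containing `X`. -/
def closedClosure {A : Type} (X : Set (Formula A)) : Set (Formula A) :=
  ⋂₀ { T | TheoryClosed T ∧ X ⊆ T }

theorem subset_closedClosure {A : Type} (X : Set (Formula A)) : X ⊆ closedClosure X :=
  Set.subset_sInter fun _ hT => hT.2

theorem theoryClosed_closedClosure {A : Type} (X : Set (Formula A)) :
    TheoryClosed (closedClosure X) :=
  fun φ hφ T hT => hT.1 φ (hφ T hT)

/-- `M_{T₀,S}`, with `T₀` the closure of `X`, satisfies `T₀` if it satisfies `X`: the formulas of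
`T₀` true in it form a closed theory containing `X`. -/
theorem canonModel_sat_closedClosure {A : Type} {X : Set (Formula A)} {S : Set A}
    (h : (canonModel (closedClosure X) S).SatTheory X) :
    (canonModel (closedClosure X) S).SatTheory (closedClosure X) := by
  intro φ hφ
  have hmem := hφ {φ | φ ∈ closedClosure X ∧ (canonModel (closedClosure X) S).Sat φ}
    ⟨fun ψ hψ => ⟨theoryClosed_closedClosure X ψ hψ.1, fun _ hM => hM ψ hψ.1⟩,
      fun ψ hψ => ⟨subset_closedClosure X hψ, h ψ hψ⟩⟩
  exact hmem.2

/-- same as Statement 13 but with `H` closed generic. -/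
theorem statement14 (A : Type) [Nonempty A] (p : A) (H : Set (Formula A))
    (hH : ClosedGeneric H) :
    (∀ S : Set A, p ∉ S →
      (canonModel
        (closedClosure (H ∪
          {Formula.iffF (Formula.atom p) (Formula.K (Formula.neg (Formula.atom p)))}))
        S).SatTheory
        (closedClosure (H ∪
          {Formula.iffF (Formula.atom p) (Formula.K (Formula.neg (Formula.atom p)))})
          ∪ schemaT A)) ∧
    Consistent
      (closedClosure (H ∪
        {Formula.iffF (Formula.atom p) (Formula.K (Formula.neg (Formula.atom p)))})
        ∪ schemaT A) := by
  set X := H ∪ {Formula.iffF (Formula.atom p) (Formula.K (Formula.neg (Formula.atom p)))}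
  have hHsat (S : Set A) : (canonModel (closedClosure X) S).SatTheory H :=
    hH S _ (theoryClosed_closedClosure X)
      (Set.subset_union_left.trans (subset_closedClosure X))
  have hnot : ¬ Entails (closedClosure X) (Formula.neg (Formula.atom p)) := by
    intro hent
    -- If `¬p` were entailed, making every atom true would make both sides of `p ↔ K¬p` true.
    refine hent _ (canonModel_sat_closedClosure (S := Set.univ) ?_) (Set.mem_univ p)
    rintro φ (hφ | rfl)
    · exact hHsat _ φ hφ
    · exact ⟨fun _ => hent, fun _ => Set.mem_univ p⟩
  have main (S : Set A) (hp : p ∉ S) :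
      (canonModel (closedClosure X) S).SatTheory (closedClosure X ∪ schemaT A) := by
    have h0 : (canonModel (closedClosure X) S).SatTheory (closedClosure X) := by
      apply canonModel_sat_closedClosure
      rintro φ (hφ | rfl)
      · exact hHsat _ φ hφ
      · exact ⟨fun h => absurd h hp, fun h => absurd h hnot⟩
    rintro φ (hφ | ⟨ψ, rfl⟩)
    · exact h0 φ hφ
    · exact fun hent => hent _ h0
  exact ⟨main, _, main ∅ (Set.notMem_empty p)⟩
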